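/- Let n ≥ 1. The infimum, over all nonempty bounded open convex sets P ⊆ ℝ^n and all convex Lebesgue-integrable functions φ : P → ℝ with ∫_P φ dμ = 0 and inf_P φ < 0, of the ratio (∫_P |φ| dμ) / (−μ(P) · inf_P φ), equals (2/(n+1))·(n/(n+1))^n; moreover this infimum is attained (by the open simplex P with vertices 0 and ((n+1)/n)e_i, 1 ≤ i ≤ n, together with φ(x) = −1 + x_1 + … + x_n). -/

import Mathlib

open MeasureTheory Set
open scoped Pointwise

/-!
Since `φ` has mean zero, `∫ |φ| = 2 ∫ φ⁻`. Fix `x ∈ P`. The homothety `h` with centre `x` and ratio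
`s = n / (n + 1)` maps the convex set `P` into itself, and convexity gives
`φ⁻ (h y) ≥ -s φ y - (1 - s) φ x`. Integrating over `y ∈ P` and changing variables, the term with
`φ y` drops out and `∫ φ⁻ ≥ s ^ n (1 - s) (-φ x) μ(P)`; the ratio `s = n / (n + 1)` maximises
`s ^ n (1 - s)`. Taking the infimum over `x` yields the bound.

For the extremal simplices both the mean of `φ` and `∫ φ⁻` come from the layer cake formula, because
the superlevel sets of `φ⁻` are again simplices, homothetic to the original one.
-/

section NegPart

variable {α : Type*} [MeasurableSpace α] {μ : Measure α} {f : α → ℝ}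

lemma integrable_negPart (hf : Integrable f μ) : Integrable (fun x ↦ (f x)⁻) μ :=
  hf.neg_part

lemma integral_abs_eq_two_mul_integral_negPart (hf : Integrable f μ) (h0 : ∫ x, f x ∂μ = 0) :
    ∫ x, |f x| ∂μ = 2 * ∫ x, (f x)⁻ ∂μ := by
  have habs (a : ℝ) : |a| = a + 2 * a⁻ := by
    linarith [posPart_add_negPart a, posPart_sub_negPart a]
  simp_rw [habs]
  rw [integral_add hf ((integrable_negPart hf).const_mul 2), h0, zero_add, integral_const_mul]

end NegPart

section Homothety

open Module AffineMap

variable {E : Type*} [NormedAddCommGroup E] [NormedSpace ℝ E] [FiniteDimensional ℝ E]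
  [MeasurableSpace E] [BorelSpace E] (μ : Measure E) [μ.IsAddHaarMeasure]
  {F : Type*} [NormedAddCommGroup F]

lemma integral_comp_homothety [NormedSpace ℝ F] (f : E → F) (x : E) (r : ℝ) :
    ∫ y, f (homothety x r y) ∂μ = |(r ^ finrank ℝ E)⁻¹| • ∫ y, f y ∂μ := by
  simp only [homothety_apply, vsub_eq_sub, vadd_eq_add]
  rw [integral_sub_right_eq_self (fun y ↦ f (r • y + x)) x,
    Measure.integral_comp_smul μ (fun y ↦ f (y + x)) r, integral_add_right_eq_self f x]

variable {μ}

lemma integrable_comp_homothety {f : E → F} (hf : Integrable f μ) (x : E) {r : ℝ} (hr : r ≠ 0) :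
    Integrable (fun y ↦ f (homothety x r y)) μ := by
  simpa only [homothety_apply, vsub_eq_sub, vadd_eq_add] using
    ((hf.comp_add_right x).comp_smul hr).comp_sub_right x

lemma integrableOn_comp_homothety {f : E → F} {P : Set E} (hP : NullMeasurableSet P μ)
    (hf : IntegrableOn f P μ) {x : E} {r : ℝ} (hr : r ≠ 0) (hmaps : MapsTo (homothety x r) P P) :
    IntegrableOn (fun y ↦ f (homothety x r y)) P μ := by
  have hcomp := integrable_comp_homothety (hf.integrable_indicator₀ hP) x hr
  refine hcomp.integrableOn.congr_fun_ae ?_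
  filter_upwards [ae_restrict_mem₀ hP] with y hy using indicator_of_mem (hmaps hy) f

lemma pow_mul_setIntegral_comp_homothety_le {f : E → ℝ} {P : Set E} (hP : NullMeasurableSet P μ)
    (hf : IntegrableOn f P μ) (hf0 : ∀ y ∈ P, 0 ≤ f y) {x : E} {r : ℝ} (hr : 0 < r)
    (hmaps : MapsTo (homothety x r) P P) :
    r ^ finrank ℝ E * ∫ y in P, f (homothety x r y) ∂μ ≤ ∫ y in P, f y ∂μ := by
  have hcomp := integrable_comp_homothety (hf.integrable_indicator₀ hP) x hr.ne'
  calc r ^ finrank ℝ E * ∫ y in P, f (homothety x r y) ∂μ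
      = r ^ finrank ℝ E * ∫ y in P, P.indicator f (homothety x r y) ∂μ := by
        congr 1
        refine integral_congr_ae ?_
        filter_upwards [ae_restrict_mem₀ hP] with y hy using (indicator_of_mem (hmaps hy) f).symm
    _ ≤ r ^ finrank ℝ E * ∫ y, P.indicator f (homothety x r y) ∂μ := by
        gcongr ?_ * ?_
        exact setIntegral_le_integral hcomp (.of_forall fun y ↦ indicator_nonneg hf0 _)
    _ = ∫ y in P, f y ∂μ := by
        rw [integral_comp_homothety, integral_indicator₀ hP, abs_of_pos (by positivity),
          smul_eq_mul, mul_inv_cancel_left₀ (by positivity)]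

end Homothety

section LowerBound

open Module AffineMap

variable {E : Type*} [NormedAddCommGroup E] [NormedSpace ℝ E] {P : Set E} {φ : E → ℝ}

lemma neg_combination_le_negPart_homothety (hφ : ConvexOn ℝ P φ) {x y : E} (hx : x ∈ P) (hy : y ∈ P)
    {s : ℝ} (hs : s ∈ Icc 0 1) :
    (1 - s) * -φ x - s * φ y ≤ (φ (homothety x s y))⁻ := by
  have hconv := hφ.2 hx hy (sub_nonneg.2 hs.2) hs.1 (sub_add_cancel 1 s)
  rw [homothety_eq_lineMap, lineMap_apply_module]
  simp only [smul_eq_mul] at hconv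
  exact le_trans (by linarith) (neg_le_negPart _)

variable [FiniteDimensional ℝ E] [MeasurableSpace E] [BorelSpace E] {μ : Measure E}
  [μ.IsAddHaarMeasure]

lemma pow_mul_sub_le_setIntegral_negPart (hφ : ConvexOn ℝ P φ) (hμP : μ P ≠ ⊤)
    (hint : IntegrableOn φ P μ) {x : E} (hx : x ∈ P) {s : ℝ} (hs : s ∈ Ioc 0 1) :
    s ^ finrank ℝ E * ((1 - s) * (-φ x * μ.real P) - s * ∫ y in P, φ y ∂μ)
      ≤ ∫ y in P, (φ y)⁻ ∂μ := by
  have hP : NullMeasurableSet P μ := hφ.1.nullMeasurableSet μ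
  have hmaps : MapsTo (homothety x s) P P := fun y hy ↦ by
    rw [homothety_eq_lineMap]
    exact hφ.1.lineMap_mem hx hy (Ioc_subset_Icc_self hs)
  have hneg : IntegrableOn (fun y ↦ (φ y)⁻) P μ := integrable_negPart hint
  have hconst : IntegrableOn (fun _ ↦ (1 - s) * -φ x) P μ := integrableOn_const hμP
  calc s ^ finrank ℝ E * ((1 - s) * (-φ x * μ.real P) - s * ∫ y in P, φ y ∂μ)
      = s ^ finrank ℝ E * ∫ y in P, ((1 - s) * -φ x - s * φ y) ∂μ := by
        rw [integral_sub hconst (hint.const_mul s), setIntegral_const, integral_const_mul,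
          smul_eq_mul]
        ring
    _ ≤ s ^ finrank ℝ E * ∫ y in P, (φ (homothety x s y))⁻ ∂μ := by
        have hs0 := hs.1
        gcongr ?_ * ?_
        exact setIntegral_mono_on₀ (hconst.sub (hint.const_mul s))
          (integrableOn_comp_homothety hP hneg hs0.ne' hmaps) hP fun y hy ↦
            neg_combination_le_negPart_homothety hφ hx hy (Ioc_subset_Icc_self hs)
    _ ≤ ∫ y in P, (φ y)⁻ ∂μ :=
        pow_mul_setIntegral_comp_homothety_le hP hneg (fun _ _ ↦ negPart_nonneg _) hs.1 hmaps

variable [Nontrivial E]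

lemma mul_neg_le_setIntegral_abs (hφ : ConvexOn ℝ P φ) (hμP : μ P ≠ ⊤) (hint : IntegrableOn φ P μ)
    (h0 : ∫ y in P, φ y ∂μ = 0) {x : E} (hx : x ∈ P) :
    2 / (finrank ℝ E + 1 : ℝ) * ((finrank ℝ E : ℝ) / (finrank ℝ E + 1)) ^ finrank ℝ E *
      (μ.real P * -φ x) ≤ ∫ y in P, |φ y| ∂μ := by
  have hd : (0 : ℝ) < finrank ℝ E := mod_cast finrank_pos
  have hs : (finrank ℝ E : ℝ) / (finrank ℝ E + 1) ∈ Ioc (0 : ℝ) 1 :=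
    ⟨by positivity, div_le_one_of_le₀ (by linarith) (by positivity)⟩
  have hbound := pow_mul_sub_le_setIntegral_negPart hφ hμP hint hx hs
  rw [h0, one_sub_div (by positivity), add_sub_cancel_left] at hbound
  rw [integral_abs_eq_two_mul_integral_negPart hint h0]
  linear_combination 2 * hbound

lemma mul_neg_sInf_le_setIntegral_abs (hφ : ConvexOn ℝ P φ) (hne : P.Nonempty) (hμ0 : μ P ≠ 0)
    (hμP : μ P ≠ ⊤) (hint : IntegrableOn φ P μ) (h0 : ∫ y in P, φ y ∂μ = 0) :
    2 / (finrank ℝ E + 1 : ℝ) * ((finrank ℝ E : ℝ) / (finrank ℝ E + 1)) ^ finrank ℝ E *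
      (-(μ.real P * sInf (φ '' P))) ≤ ∫ y in P, |φ y| ∂μ := by
  have hd : (0 : ℝ) < finrank ℝ E := mod_cast finrank_pos
  have hV : 0 < μ.real P := ENNReal.toReal_pos hμ0 hμP
  set c : ℝ := 2 / (finrank ℝ E + 1) * (finrank ℝ E / (finrank ℝ E + 1)) ^ finrank ℝ E
  have : 0 < c := by positivity
  have hinf : -((∫ y in P, |φ y| ∂μ) / (c * μ.real P)) ≤ sInf (φ '' P) := by
    refine le_csInf (hne.image φ) (forall_mem_image.2 fun x hx ↦ ?_)
    rw [neg_le, le_div_iff₀ (by positivity)]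
    linarith [mul_neg_le_setIntegral_abs hφ hμP hint h0 hx]
  rw [neg_le, le_div_iff₀ (by positivity)] at hinf
  linarith

end LowerBound

section OpenSimplex

open Module

variable {ι E : Type*} [NormedAddCommGroup E] [NormedSpace ℝ E]

/-- The open simplex with vertices `0` and `t • b i`, empty for `t ≤ 0`. These are the domains on
which the infimum is attained. It is written in the coordinates of `b`, so that it scales with `t`
and its slices by `b.sumCoords` are again of this form. -/
def openSimplex (b : Basis ι ℝ E) (t : ℝ) : Set E :=
  (⋂ i, {x | 0 < b.coord i x}) ∩ {x | b.sumCoords x < t}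

variable (b : Basis ι ℝ E) {t : ℝ}

@[simp]
lemma mem_openSimplex {x : E} :
    x ∈ openSimplex b t ↔ (∀ i, 0 < b.coord i x) ∧ b.sumCoords x < t := by
  simp [openSimplex]

lemma convex_openSimplex : Convex ℝ (openSimplex b t) :=
  (convex_iInter fun i ↦ convex_halfSpace_gt (b.coord i).isLinear 0).inter
    (convex_halfSpace_lt b.sumCoords.isLinear t)

lemma smul_openSimplex {r : ℝ} (hr : 0 < r) (t : ℝ) :
    r • openSimplex b t = openSimplex b (r * t) := by
  ext x
  simp [mem_smul_set_iff_inv_smul_mem₀ hr.ne', inv_mul_lt_iff₀ hr, hr]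

lemma setOf_lt_negPart_inter_openSimplex {a u : ℝ} (hu : 0 ≤ u) (hat : a ≤ t) :
    {x | u < (b.sumCoords x - a)⁻} ∩ openSimplex b t = openSimplex b (a - u) := by
  ext x
  simp only [mem_inter_iff, mem_ofPred_eq, mem_openSimplex, negPart_def, lt_sup_iff, hu.not_gt,
    or_false]
  constructor
  · rintro ⟨hlt, hpos, -⟩
    exact ⟨hpos, by linarith⟩
  · rintro ⟨hpos, hlt⟩
    exact ⟨by linarith, hpos, by linarith⟩

variable [FiniteDimensional ℝ E]

lemma isBounded_openSimplex : Bornology.IsBounded (openSimplex b t) := by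
  let _ := FiniteDimensional.fintypeBasisIndex b
  have hcompact : IsCompact (b.equivFunL.symm '' Icc 0 fun _ ↦ t) :=
    isCompact_Icc.image b.equivFunL.symm.continuous
  refine hcompact.isBounded.subset fun x hx ↦ ⟨b.equivFunL x, ?_, b.equivFunL.symm_apply_apply x⟩
  rw [mem_openSimplex, b.coe_sumCoords_of_fintype, LinearMap.sum_apply] at hx
  exact ⟨fun i ↦ (hx.1 i).le, fun i ↦
    (Finset.single_le_sum (fun j _ ↦ (hx.1 j).le) (Finset.mem_univ i)).trans hx.2.le⟩

lemma image_sumCoords_openSimplex [Nontrivial E] (t : ℝ) :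
    b.sumCoords '' openSimplex b t = Ioo 0 t := by
  let _ := FiniteDimensional.fintypeBasisIndex b
  have := b.index_nonempty
  ext r
  constructor
  · rintro ⟨x, hx, rfl⟩
    rw [mem_openSimplex] at hx
    refine ⟨?_, hx.2⟩
    rw [b.coe_sumCoords_of_fintype, LinearMap.sum_apply]
    exact Finset.sum_pos (fun i _ ↦ hx.1 i) Finset.univ_nonempty
  · rintro ⟨hr0, hrt⟩
    have hsum : b.sumCoords (b.equivFun.symm fun _ ↦ r / Fintype.card ι) = r := by
      simp [mul_div_cancel₀]
    refine ⟨_, (mem_openSimplex b).2 ⟨fun i ↦ ?_, ?_⟩, hsum⟩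
    · rw [b.coord_equivFun_symm]
      positivity
    · rwa [hsum]

lemma nonempty_openSimplex [Nontrivial E] (ht : 0 < t) : (openSimplex b t).Nonempty := by
  rw [← image_nonempty, image_sumCoords_openSimplex]
  exact nonempty_Ioo.2 ht

lemma openSimplex_eq_empty [Nontrivial E] (ht : t ≤ 0) : openSimplex b t = ∅ := by
  rw [← image_eq_empty, image_sumCoords_openSimplex, Ioo_eq_empty ht.not_gt]

lemma sInf_image_sumCoords_sub [Nontrivial E] (ht : 0 < t) (c : ℝ) :
    sInf ((fun x ↦ b.sumCoords x - c) '' openSimplex b t) = -c := by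
  rw [← image_image (· - c) b.sumCoords, image_sumCoords_openSimplex, image_sub_const_Ioo,
    csInf_Ioo (by linarith), zero_sub]

lemma isOpen_openSimplex : IsOpen (openSimplex b t) := by
  have : Finite ι := Module.Finite.finite_basis b
  exact (isOpen_iInter_of_finite fun i ↦ isOpen_lt (by fun_prop) (by fun_prop)).inter
    (isOpen_lt (by fun_prop) (by fun_prop))

variable [MeasurableSpace E] (μ : Measure E)

lemma measureReal_openSimplex_pos [Nontrivial E] [IsFiniteMeasureOnCompacts μ]
    [μ.IsOpenPosMeasure] (ht : 0 < t) : 0 < μ.real (openSimplex b t) :=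
  ENNReal.toReal_pos ((isOpen_openSimplex b).measure_pos μ (nonempty_openSimplex b ht)).ne'
    (isBounded_openSimplex b).measure_lt_top.ne

variable [BorelSpace E]

lemma integrableOn_openSimplex [IsLocallyFiniteMeasure μ] {f : E → ℝ} (hf : Continuous f) :
    IntegrableOn f (openSimplex b t) μ :=
  (hf.continuousOn.integrableOn_compact (isBounded_openSimplex b).isCompact_closure).mono_set
    subset_closure

variable [μ.IsAddHaarMeasure] [Nontrivial E]

lemma measureReal_openSimplex (ht : 0 ≤ t) :
    μ.real (openSimplex b t) = t ^ finrank ℝ E * μ.real (openSimplex b 1) := by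
  obtain rfl | ht := ht.eq_or_lt
  · simp [openSimplex_eq_empty, finrank_pos.ne']
  · rw [← mul_one t, ← smul_openSimplex b ht, mul_one, measureReal_def,
      Measure.addHaar_smul_of_nonneg μ ht.le]
    simp [ht.le, measureReal_def]

lemma setIntegral_negPart_sumCoords_sub {a : ℝ} (ha : 0 ≤ a) (hat : a ≤ t) :
    ∫ x in openSimplex b t, (b.sumCoords x - a)⁻ ∂μ
      = a ^ (finrank ℝ E + 1) / (finrank ℝ E + 1) * μ.real (openSimplex b 1) := by
  have hslice {u : ℝ} (hu : 0 ≤ u) :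
      (μ.restrict (openSimplex b t)).real {x | u < (b.sumCoords x - a)⁻}
        = μ.real (openSimplex b (a - u)) := by
    rw [measureReal_restrict_apply' (isOpen_openSimplex b).measurableSet,
      setOf_lt_negPart_inter_openSimplex b hu hat]
  have hint : IntegrableOn (fun x ↦ (b.sumCoords x - a)⁻) (openSimplex b t) μ :=
    integrable_negPart (integrableOn_openSimplex b μ (by fun_prop))
  calc ∫ x in openSimplex b t, (b.sumCoords x - a)⁻ ∂μ
      = ∫ u in Ioi 0, μ.real (openSimplex b (a - u)) := by
        rw [hint.integral_eq_integral_meas_lt (.of_forall fun _ ↦ negPart_nonneg _)]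
        exact setIntegral_congr_fun measurableSet_Ioi fun u hu ↦ hslice (le_of_lt hu)
    _ = ∫ u in Ioc 0 a, μ.real (openSimplex b (a - u)) := by
        refine setIntegral_eq_of_subset_of_forall_sdiff_eq_zero measurableSet_Ioi
          Ioc_subset_Ioi_self fun u hu ↦ ?_
        have hau : a ≤ u := le_of_not_ge fun hua ↦ hu.2 ⟨hu.1, hua⟩
        rw [openSimplex_eq_empty b (sub_nonpos.2 hau), measureReal_empty]
    _ = ∫ u in 0..a, (a - u) ^ finrank ℝ E * μ.real (openSimplex b 1) := by
        rw [intervalIntegral.integral_of_le ha]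
        exact setIntegral_congr_fun measurableSet_Ioc fun u hu ↦
          measureReal_openSimplex b μ (sub_nonneg.2 hu.2)
    _ = a ^ (finrank ℝ E + 1) / (finrank ℝ E + 1) * μ.real (openSimplex b 1) := by
        rw [intervalIntegral.integral_mul_const,
          intervalIntegral.integral_comp_sub_left (fun u ↦ u ^ finrank ℝ E) a]
        simp

lemma setIntegral_sumCoords_openSimplex (ht : 0 ≤ t) :
    ∫ x in openSimplex b t, b.sumCoords x ∂μ
      = finrank ℝ E / (finrank ℝ E + 1) * t * μ.real (openSimplex b t) := by
  have hsplit : EqOn b.sumCoords (fun x ↦ t - (b.sumCoords x - t)⁻) (openSimplex b t) := by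
    intro x hx
    have hxt : b.sumCoords x - t ≤ 0 := sub_nonpos.2 ((mem_openSimplex b).1 hx).2.le
    simp only [negPart_eq_neg.2 hxt]
    ring
  rw [setIntegral_congr_fun (isOpen_openSimplex b).measurableSet hsplit,
    integral_sub (integrableOn_openSimplex b μ continuous_const)
      (integrable_negPart (integrableOn_openSimplex b μ (by fun_prop))),
    setIntegral_const, smul_eq_mul, setIntegral_negPart_sumCoords_sub b μ ht le_rfl,
    measureReal_openSimplex b μ ht]
  field_simp
  ring

end OpenSimplex

section Minimizer

open Module

variable {ι E : Type*} [NormedAddCommGroup E] [NormedSpace ℝ E]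
  [FiniteDimensional ℝ E] [MeasurableSpace E] [BorelSpace E] (b : Basis ι ℝ E) (μ : Measure E)
  [μ.IsAddHaarMeasure] [Nontrivial E]

lemma setIntegral_sumCoords_sub_one_eq_zero :
    ∫ x in openSimplex b ((finrank ℝ E + 1) / finrank ℝ E), (b.sumCoords x - 1) ∂μ = 0 := by
  have hd : (0 : ℝ) < finrank ℝ E := mod_cast finrank_pos
  rw [integral_sub (integrableOn_openSimplex b μ (by fun_prop))
    (integrableOn_openSimplex b μ continuous_const),
    setIntegral_sumCoords_openSimplex b μ (by positivity), setIntegral_const, smul_eq_mul]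
  field_simp
  ring

lemma setIntegral_abs_sumCoords_sub_one :
    ∫ x in openSimplex b ((finrank ℝ E + 1) / finrank ℝ E), |b.sumCoords x - 1| ∂μ
      = 2 / (finrank ℝ E + 1 : ℝ) * ((finrank ℝ E : ℝ) / (finrank ℝ E + 1)) ^ finrank ℝ E *
        μ.real (openSimplex b ((finrank ℝ E + 1) / finrank ℝ E)) := by
  have hd : (0 : ℝ) < finrank ℝ E := mod_cast finrank_pos
  rw [integral_abs_eq_two_mul_integral_negPart (integrableOn_openSimplex b μ (by fun_prop))
      (setIntegral_sumCoords_sub_one_eq_zero b μ),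
    setIntegral_negPart_sumCoords_sub b μ zero_le_one ((one_le_div hd).2 (by linarith)),
    measureReal_openSimplex b μ (t := _ / _) (by positivity), one_pow, div_pow, div_pow]
  field_simp

end Minimizer

open Module in
theorem stmt_11_general {E : Type*} [NormedAddCommGroup E] [NormedSpace ℝ E]
    [FiniteDimensional ℝ E] [Nontrivial E] [MeasurableSpace E] [BorelSpace E] (μ : Measure E)
    [μ.IsAddHaarMeasure] :
    IsLeast {r : ℝ | ∃ (P : Set E) (φ : E → ℝ),
      P.Nonempty ∧ Bornology.IsBounded P ∧ IsOpen P ∧ Convex ℝ P ∧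
      ConvexOn ℝ P φ ∧ IntegrableOn φ P μ ∧ (∫ x in P, φ x ∂μ) = 0 ∧
      sInf (φ '' P) < 0 ∧
      r = (∫ x in P, |φ x| ∂μ) / (-((μ P).toReal * sInf (φ '' P)))}
      (2 / (finrank ℝ E + 1 : ℝ) * ((finrank ℝ E : ℝ) / (finrank ℝ E + 1)) ^ finrank ℝ E) := by
  constructor
  · let b := finBasis ℝ E
    have hd : (0 : ℝ) < finrank ℝ E := mod_cast finrank_pos
    have ht : (0 : ℝ) < (finrank ℝ E + 1) / finrank ℝ E := by positivity
    have hinf := sInf_image_sumCoords_sub b ht 1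
    have hV := measureReal_openSimplex_pos b μ ht
    refine ⟨_, fun x ↦ b.sumCoords x - 1, nonempty_openSimplex b ht, isBounded_openSimplex b,
      isOpen_openSimplex b, convex_openSimplex b,
      (b.sumCoords.convexOn (convex_openSimplex b)).sub (concaveOn_const 1 (convex_openSimplex b)),
      integrableOn_openSimplex b μ (by fun_prop), setIntegral_sumCoords_sub_one_eq_zero b μ,
      by rw [hinf]; norm_num, ?_⟩
    rw [hinf, setIntegral_abs_sumCoords_sub_one, ← measureReal_def, mul_neg_one, neg_neg,
      mul_div_cancel_right₀ _ hV.ne']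
  · rintro _ ⟨P, φ, hne, hbdd, hopen, -, hφ, hint, h0, hinf, rfl⟩
    have hμ0 : 0 < μ P := hopen.measure_pos μ hne
    have hμP : μ P ≠ ⊤ := hbdd.measure_lt_top.ne
    have hden : 0 < -((μ P).toReal * sInf (φ '' P)) :=
      neg_pos.2 (mul_neg_of_pos_of_neg (ENNReal.toReal_pos hμ0.ne' hμP) hinf)
    rw [le_div_iff₀ hden]
    exact mul_neg_sInf_le_setIntegral_abs hφ hne hμ0.ne' hμP hint h0

/-- The infimum of the ratios `(∫_P |φ|)/(-μ(P) inf_P φ)` over all nonempty bounded open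
convex `P ⊆ ℝⁿ` and all centered convex integrable `φ : P → ℝ` with negative infimum
equals `(2/(n+1)) (n/(n+1))^n`, and this infimum is attained. -/
theorem stmt_11 (n : ℕ) (hn : 1 ≤ n)
    (S : Set ℝ)
    (hS : S = {r : ℝ | ∃ (P : Set (Fin n → ℝ)) (φ : (Fin n → ℝ) → ℝ),
      P.Nonempty ∧ Bornology.IsBounded P ∧ IsOpen P ∧ Convex ℝ P ∧
      ConvexOn ℝ P φ ∧ IntegrableOn φ P volume ∧ (∫ x in P, φ x) = 0 ∧
      sInf (φ '' P) < 0 ∧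
      r = (∫ x in P, |φ x|) / (-((volume P).toReal * sInf (φ '' P)))}) :
    IsGLB S ((2 / (n + 1 : ℝ)) * ((n : ℝ) / (n + 1)) ^ n) ∧
      (2 / (n + 1 : ℝ)) * ((n : ℝ) / (n + 1)) ^ n ∈ S := by
  subst hS
  have : Nonempty (Fin n) := ⟨⟨0, hn⟩⟩
  have hleast := stmt_11_general (volume : Measure (Fin n → ℝ))
  rw [Module.finrank_fin_fun] at hleast
  exact ⟨hleast.isGLB, hleast.1⟩
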